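/- arXiv:2405.06327 — 2 statements merged into one kernel-verified Lean document; each statement's English description precedes it below -/
import Mathlib

section
/- Let G ∈ ℂ^{p×k} and V ∈ ℂ^{n×p}. Then σ_p(G ⊙^T V^T) ≥ σ_p(G) · σ_p(V). If moreover every column of V has unit Euclidean norm, then σ_p(V) ≥ κ₂(V)^{−1} where κ₂(V) = σ_1(V)/σ_p(V), and hence σ_p(G ⊙^T V^T) ≥ σ_p(G)/κ₂(V); in particular, if p ≤ kn and G ⊙^T V^T has full row rank, then ‖(G ⊙^T V^T)†‖₂ ≤ σ_p(G)^{−1} κ₂(V). -/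
open Matrix Kronecker BigOperators

noncomputable section

/-- Frobenius norm of a complex matrix. -/
def fnorm {ι κ : Type*} [Fintype ι] [Fintype κ] (A : Matrix ι κ ℂ) : ℝ :=
  Real.sqrt (∑ i, ∑ j, ‖A i j‖ ^ 2)

/-- Euclidean norm of a complex vector. -/
def vnorm {ι : Type*} [Fintype ι] (v : ι → ℂ) : ℝ :=
  Real.sqrt (∑ i, ‖v i‖ ^ 2)

/-- The four Moore–Penrose conditions. -/
def IsMoorePenrose {ι κ : Type*} [Fintype ι] [Fintype κ]
    (A : Matrix ι κ ℂ) (B : Matrix κ ι ℂ) : Prop :=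
  A * B * A = A ∧ B * A * B = B ∧ (A * B)ᴴ = A * B ∧ (B * A)ᴴ = B * A

open scoped Classical in
/-- The Moore–Penrose pseudoinverse (defined by choice; it always exists and is unique). -/
noncomputable def pinv {ι κ : Type*} [Fintype ι] [Fintype κ] (A : Matrix ι κ ℂ) :
    Matrix κ ι ℂ :=
  if h : ∃ B, IsMoorePenrose A B then h.choose else 0

/-- `s` is a singular value of `A`: `s ≥ 0` and `s²` is an eigenvalue of `Aᴴ A`. -/
def IsSingularValue {ι κ : Type*} [Fintype ι] [Fintype κ] (A : Matrix ι κ ℂ) (s : ℝ) : Prop :=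
  0 ≤ s ∧ ∃ w : κ → ℂ, w ≠ 0 ∧ (Aᴴ * A).mulVec w = ((s : ℂ) ^ 2) • w

/-- The smallest nonzero singular value of `A`, i.e. `σ_p̂(A)` where `p̂ = rank A`. -/
noncomputable def sigmaMinPos {ι κ : Type*} [Fintype ι] [Fintype κ] (A : Matrix ι κ ℂ) : ℝ :=
  sInf {s : ℝ | IsSingularValue A s ∧ 0 < s}

/-- The smallest singular value of a square matrix `A`, the minimum of `‖A v‖₂` over
unit vectors `v`. -/
noncomputable def sigmaMinSq {n : ℕ} (A : Matrix (Fin n) (Fin n) ℂ) : ℝ :=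
  sInf {x : ℝ | ∃ w : Fin n → ℂ, vnorm w = 1 ∧ x = vnorm (A.mulVec w)}

/-- The transposed Khatri–Rao product `G ⊙^T W` of `G : p × k` and `W : p × n`:
the `p × kn` matrix whose `i`-th row is `[G i 1 • (row i of W), …, G i k • (row i of W)]`. -/
def krt {p k n : ℕ} (G : Matrix (Fin p) (Fin k) ℂ) (W : Matrix (Fin p) (Fin n) ℂ) :
    Matrix (Fin p) (Fin k × Fin n) ℂ :=
  Matrix.of fun i jl => G i jl.1 * W i jl.2

/-- `σ_p(A)` for a matrix `A` with rows indexed by `ι` (`|ι| = p`): the smallest of the first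
`p` singular values, characterized variationally as the minimum of `‖w^* A‖₂` over unit
vectors `w`. -/
noncomputable def sigRowMin {ι κ : Type*} [Fintype ι] [Fintype κ] (A : Matrix ι κ ℂ) : ℝ :=
  sInf {x : ℝ | ∃ w : ι → ℂ, vnorm w = 1 ∧ x = vnorm (Matrix.vecMul (star w) A)}

/-- `σ_p(A)` for a matrix `A` with columns indexed by `κ` (`|κ| = p`): the smallest of the
first `p` singular values, characterized as the minimum of `‖A w‖₂` over unit vectors `w`. -/
noncomputable def sigColMin {ι κ : Type*} [Fintype ι] [Fintype κ] (A : Matrix ι κ ℂ) : ℝ :=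
  sInf {x : ℝ | ∃ w : κ → ℂ, vnorm w = 1 ∧ x = vnorm (A.mulVec w)}

/-- `σ_1(A)`, the largest singular value (spectral norm) of `A`: the supremum of `‖A w‖₂`
over unit vectors `w`. -/
noncomputable def sigColMax {ι κ : Type*} [Fintype ι] [Fintype κ] (A : Matrix ι κ ℂ) : ℝ :=
  sSup {x : ℝ | ∃ w : κ → ℂ, vnorm w = 1 ∧ x = vnorm (A.mulVec w)}

lemma vnorm_eq_aux {ι : Type*} [Fintype ι] (v : ι → ℂ) : vnorm v = ‖WithLp.toLp 2 v‖ := by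
  rw [EuclideanSpace.norm_eq]; rfl

lemma vnorm_sq_aux {ι : Type*} [Fintype ι] (v : ι → ℂ) : vnorm v ^ 2 = ∑ i, ‖v i‖ ^ 2 :=
  Real.sq_sqrt (Finset.sum_nonneg fun _ _ => by positivity)

lemma vnorm_nonneg_aux {ι : Type*} [Fintype ι] (v : ι → ℂ) : 0 ≤ vnorm v := Real.sqrt_nonneg _

lemma vnorm_star_aux {ι : Type*} [Fintype ι] (v : ι → ℂ) : vnorm (star v) = vnorm v := by
  simp [vnorm]

lemma vnorm_smul_aux {ι : Type*} [Fintype ι] (c : ℂ) (v : ι → ℂ) :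
    vnorm (c • v) = ‖c‖ * vnorm v := by
  rw [vnorm_eq_aux, vnorm_eq_aux, WithLp.toLp_smul, norm_smul]

lemma vnorm_single_aux {ι : Type*} [Fintype ι] [DecidableEq ι] (i : ι) :
    vnorm (Pi.single i (1 : ℂ)) = 1 := by
  have := EuclideanSpace.norm_single (𝕜 := ℂ) i (1 : ℂ)
  rw [vnorm_eq_aux]
  simpa using this

lemma vnorm_dot_aux {ι : Type*} [Fintype ι] (v w : ι → ℂ) :
    ‖star v ⬝ᵥ w‖ ≤ vnorm v * vnorm w := by
  have := norm_inner_le_norm (𝕜 := ℂ) (WithLp.toLp 2 v) (WithLp.toLp 2 w)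
  rw [EuclideanSpace.inner_toLp_toLp, dotProduct_comm] at this
  rwa [vnorm_eq_aux, vnorm_eq_aux]

lemma vnorm_dot_self_aux {ι : Type*} [Fintype ι] (v : ι → ℂ) :
    ‖star v ⬝ᵥ v‖ = vnorm v ^ 2 := by
  have := inner_self_eq_norm_sq_to_K (𝕜 := ℂ) (WithLp.toLp 2 v)
  rw [EuclideanSpace.inner_toLp_toLp, dotProduct_comm] at this
  rw [this, vnorm_eq_aux]
  simp

lemma sigColMin_nonneg_aux {ι κ : Type*} [Fintype ι] [Fintype κ] (A : Matrix ι κ ℂ) :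
    0 ≤ sigColMin A :=
  Real.sInf_nonneg (by rintro x ⟨w, _, rfl⟩; exact vnorm_nonneg_aux _)

lemma sigColMin_mul_le_aux {ι κ : Type*} [Fintype ι] [Fintype κ] (A : Matrix ι κ ℂ)
    (u : κ → ℂ) : sigColMin A * vnorm u ≤ vnorm (A *ᵥ u) := by
  rcases (vnorm_nonneg_aux u).eq_or_lt with h | h
  · rw [← h, mul_zero]; exact vnorm_nonneg_aux _
  · have hc : ‖((vnorm u : ℂ))⁻¹‖ = (vnorm u)⁻¹ := by
      rw [norm_inv, Complex.norm_real, Real.norm_of_nonneg h.le]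
    have h1 : sigColMin A ≤ vnorm (A *ᵥ (((vnorm u : ℂ))⁻¹ • u)) := by
      apply csInf_le
      · exact ⟨0, by rintro x ⟨w, _, rfl⟩; exact vnorm_nonneg_aux _⟩
      · refine ⟨_, ?_, rfl⟩
        rw [vnorm_smul_aux, hc, inv_mul_cancel₀ h.ne']
    rw [Matrix.mulVec_smul, vnorm_smul_aux, hc] at h1
    calc sigColMin A * vnorm u ≤ ((vnorm u)⁻¹ * vnorm (A *ᵥ u)) * vnorm u := by gcongr
      _ = vnorm (A *ᵥ u) := by field_simp

lemma sigRowMin_eq_aux {ι κ : Type*} [Fintype ι] [Fintype κ] (A : Matrix ι κ ℂ) :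
    sigRowMin A = sigColMin Aᴴ := by
  have h : ∀ w : ι → ℂ, vnorm (Matrix.vecMul (star w) A) = vnorm (Aᴴ *ᵥ w) := fun w => by
    rw [← vnorm_star_aux, Matrix.star_vecMul, star_star]
  simp only [sigRowMin, sigColMin, h]

lemma le_sigColMax_aux {ι κ : Type*} [Fintype ι] [Fintype κ] (A : Matrix ι κ ℂ)
    (u : κ → ℂ) (hu : vnorm u = 1) : vnorm (A *ᵥ u) ≤ sigColMax A := by
  refine le_csSup ?_ ⟨u, hu, rfl⟩
  refine ⟨Real.sqrt (∑ i, (vnorm (star (A i))) ^ 2), ?_⟩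
  rintro x ⟨w, hw, rfl⟩
  apply Real.sqrt_le_sqrt
  apply Finset.sum_le_sum
  intro i _
  have := vnorm_dot_aux (star (A i)) w
  rw [star_star, hw, mul_one] at this
  exact pow_le_pow_left₀ (norm_nonneg _) this 2

lemma krt_aux (n k p : ℕ)
    (G : Matrix (Fin p) (Fin k) ℂ) (V : Matrix (Fin n) (Fin p) ℂ) (w : Fin p → ℂ)
    (hw : vnorm w = 1) :
    sigRowMin G * sigColMin V ≤ vnorm (Matrix.vecMul (star w) (krt G Vᵀ)) := by
  have hV := sigColMin_nonneg_aux V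
  have hG : 0 ≤ sigRowMin G := by rw [sigRowMin_eq_aux]; exact sigColMin_nonneg_aux _
  have hrow : ∀ i, sigRowMin G ≤ vnorm (G i) := fun i => by
    have := sigColMin_mul_le_aux Gᴴ (Pi.single i 1)
    rw [vnorm_single_aux, mul_one, ← sigRowMin_eq_aux, Matrix.mulVec_single_one] at this
    rw [← vnorm_star_aux]
    exact this
  apply le_of_sq_le_sq _ (vnorm_nonneg_aux _)
  set u : Fin k → Fin p → ℂ := fun j i => star (w i) * G i j with hu
  have key : vnorm (Matrix.vecMul (star w) (krt G Vᵀ)) ^ 2 = ∑ j, vnorm (V *ᵥ u j) ^ 2 := by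
    simp_rw [vnorm_sq_aux]
    rw [Fintype.sum_prod_type]
    refine Finset.sum_congr rfl fun j _ => Finset.sum_congr rfl fun l _ => ?_
    congr 2
    simp only [Matrix.vecMul, Matrix.mulVec, dotProduct, krt, Matrix.of_apply, hu,
      Matrix.transpose_apply, Pi.star_apply]
    exact Finset.sum_congr rfl fun i _ => by ring
  rw [key]
  calc (sigRowMin G * sigColMin V) ^ 2
      = sigColMin V ^ 2 * ∑ i, ‖w i‖ ^ 2 * sigRowMin G ^ 2 := by
        rw [← Finset.sum_mul, ← vnorm_sq_aux, hw]; ring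
    _ ≤ sigColMin V ^ 2 * ∑ i, ‖w i‖ ^ 2 * vnorm (G i) ^ 2 := by
        gcongr with i; exact hrow i
    _ = ∑ j, (sigColMin V * vnorm (u j)) ^ 2 := by
        simp_rw [mul_pow, vnorm_sq_aux, ← Finset.mul_sum]
        congr 1
        simp_rw [Finset.mul_sum]
        rw [Finset.sum_comm]
        simp [hu, mul_pow]
    _ ≤ _ := by
        gcongr with j
        · exact mul_nonneg hV (vnorm_nonneg_aux _)
        · exact sigColMin_mul_le_aux V (u j)

lemma pinv_aux {ι κ : Type*} [Fintype ι] [Fintype κ] (A : Matrix ι κ ℂ)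
    (hA : 0 < sigRowMin A) : sigColMax (pinv A) ≤ (sigRowMin A)⁻¹ := by
  classical
  apply Real.sSup_le _ (inv_nonneg.2 hA.le)
  rintro x ⟨w, hw, rfl⟩
  by_cases h : ∃ B, IsMoorePenrose A B
  swap
  · rw [pinv, dif_neg h]; simpa [vnorm] using hA.le
  have hB : IsMoorePenrose A (pinv A) := by
    rw [pinv, dif_pos h]; exact h.choose_spec
  set B := pinv A
  obtain ⟨h1, h2, h3, h4⟩ := hB
  have hinj : ∀ z : ι → ℂ, sigRowMin A * vnorm z ≤ vnorm (Aᴴ *ᵥ z) := fun z => by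
    rw [sigRowMin_eq_aux]; exact sigColMin_mul_le_aux _ _
  set z := (Bᴴ * B) *ᵥ w with hz
  have hBw : B *ᵥ w = Aᴴ *ᵥ z := by
    rw [hz, Matrix.mulVec_mulVec, ← Matrix.mul_assoc, ← Matrix.conjTranspose_mul, h4, h2]
  -- A B w = w
  have hABw : A *ᵥ (B *ᵥ w) = w := by
    have h0 : Aᴴ *ᵥ (A *ᵥ (B *ᵥ w) - w) = 0 := by
      rw [Matrix.mulVec_sub, Matrix.mulVec_mulVec, Matrix.mulVec_mulVec]
      have : Aᴴ * (A * B) = Aᴴ := by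
        rw [← h3, ← Matrix.conjTranspose_mul, h1]
      rw [← Matrix.mul_assoc] at this
      rw [this, sub_self]
    have := hinj (A *ᵥ (B *ᵥ w) - w)
    rw [h0] at this
    have hv0 : vnorm (0 : κ → ℂ) = 0 := by simp [vnorm]
    rw [hv0] at this
    have h5 : vnorm (A *ᵥ (B *ᵥ w) - w) = 0 :=
      le_antisymm (by nlinarith) (vnorm_nonneg_aux _)
    rw [vnorm_eq_aux, norm_eq_zero] at h5
    exact sub_eq_zero.1 ((WithLp.toLp_eq_zero 2).1 h5)
  have hdot : vnorm (B *ᵥ w) ^ 2 ≤ vnorm z := by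
    rw [← vnorm_dot_self_aux]
    nth_rewrite 2 [hBw]
    rw [Matrix.dotProduct_mulVec, ← Matrix.star_mulVec, hABw]
    simpa [hw] using vnorm_dot_aux w z
  have h6 := hinj z
  rw [← hBw] at h6
  rcases (vnorm_nonneg_aux (B *ᵥ w)).eq_or_lt with h7 | h7
  · rw [← h7]; exact inv_nonneg.2 hA.le
  rw [← one_div, le_div_iff₀ hA]
  nlinarith

/-- Bounds on the smallest singular value of the transposed Khatri–Rao product:
`σ_p(G ⊙ᵀ Vᵀ) ≥ σ_p(G) σ_p(V)`; if moreover every column of `V` has unit norm, then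
`σ_p(V) ≥ κ₂(V)⁻¹` (with `κ₂(V) = σ₁(V)/σ_p(V)`) and hence
`σ_p(G ⊙ᵀ Vᵀ) ≥ σ_p(G)/κ₂(V)`; in particular, if `p ≤ kn` and `G ⊙ᵀ Vᵀ` has full row rank
(and the right-hand side is finite, i.e. `σ_p(G) > 0` and `σ_p(V) > 0`), then
`‖(G ⊙ᵀ Vᵀ)†‖₂ ≤ σ_p(G)⁻¹ κ₂(V)`. -/
theorem khatri_rao_sigma_min_bounds (n k p : ℕ)
    (G : Matrix (Fin p) (Fin k) ℂ) (V : Matrix (Fin n) (Fin p) ℂ) :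
    sigRowMin G * sigColMin V ≤ sigRowMin (krt G Vᵀ) ∧
    ((∀ i, vnorm (fun l => V l i) = 1) →
      (sigColMax V / sigColMin V)⁻¹ ≤ sigColMin V ∧
      sigRowMin G / (sigColMax V / sigColMin V) ≤ sigRowMin (krt G Vᵀ)) ∧
    ((∀ i, vnorm (fun l => V l i) = 1) → p ≤ k * n → (krt G Vᵀ).rank = p →
      0 < sigRowMin G → 0 < sigColMin V →
      sigColMax (pinv (krt G Vᵀ)) ≤ (sigRowMin G)⁻¹ * (sigColMax V / sigColMin V)) := by
  have hV := sigColMin_nonneg_aux V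
  have hG : 0 ≤ sigRowMin G := by rw [sigRowMin_eq_aux]; exact sigColMin_nonneg_aux _
  have main : sigRowMin G * sigColMin V ≤ sigRowMin (krt G Vᵀ) := by
    rcases Nat.eq_zero_or_pos p with rfl | hp
    · have h : ∀ w : Fin 0 → ℂ, vnorm w ≠ 1 := fun w => by simp [vnorm]
      simp [sigRowMin, h]
    · apply le_csInf
      · exact ⟨_, Pi.single ⟨0, hp⟩ 1, vnorm_single_aux _, rfl⟩
      · rintro x ⟨w, hw, rfl⟩
        exact krt_aux n k p G V w hw
  have hκ : (∀ i, vnorm (fun l => V l i) = 1) →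
      (sigColMax V / sigColMin V)⁻¹ ≤ sigColMin V := fun hc => by
    rw [inv_div]
    rcases Nat.eq_zero_or_pos p with rfl | hp
    · have h : ∀ w : Fin 0 → ℂ, vnorm w ≠ 1 := fun w => by simp [vnorm]
      simp [sigColMin, h]
    · have := le_sigColMax_aux V (Pi.single ⟨0, hp⟩ 1) (vnorm_single_aux _)
      rw [Matrix.mulVec_single_one] at this
      have h2 : (1 : ℝ) ≤ sigColMax V := by
        rw [← hc ⟨0, hp⟩]; exact this
      exact div_le_self hV h2
  have h2 : (∀ i, vnorm (fun l => V l i) = 1) →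
      sigRowMin G / (sigColMax V / sigColMin V) ≤ sigRowMin (krt G Vᵀ) := fun hc =>
    (by rw [div_eq_mul_inv]; exact mul_le_mul_of_nonneg_left (hκ hc) hG : _ ≤ _).trans main
  refine ⟨main, fun hc => ⟨hκ hc, h2 hc⟩, fun hc _ _ hG' hV' => ?_⟩
  have hA : 0 < sigRowMin (krt G Vᵀ) := (mul_pos hG' hV').trans_le main
  have hp : 0 < p := by
    rcases Nat.eq_zero_or_pos p with rfl | hp
    · have h : ∀ w : Fin 0 → ℂ, vnorm w ≠ 1 := fun w => by simp [vnorm]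
      simp [sigColMin, h] at hV'
    · exact hp
  have hmax : 0 < sigColMax V := by
    refine hV'.trans_le (le_trans ?_
      (le_sigColMax_aux V (Pi.single ⟨0, hp⟩ 1) (vnorm_single_aux _)))
    simpa [vnorm_single_aux] using sigColMin_mul_le_aux V (Pi.single ⟨0, hp⟩ 1)
  refine (pinv_aux _ hA).trans ?_
  have h3 := inv_anti₀ (by positivity) (h2 hc)
  rwa [inv_div, div_eq_inv_mul] at h3
end
end

section
/- Assume each coefficient F_j lies in a linear subspace 𝒮_j = span(P^{(1,j)}, …, P^{(d_j,j)}) ⊆ ℂ^{n×n}, where the basis matrices P^{(i,j)} are orthonormal with respect to the Frobenius inner product. Then the structured backward error of the approximate eigenpairs (V, Λ) satisfies η_𝒮 = ‖[((G ⊙^T V^T) ⊗ I_n) P]† r‖₂, where r = vec(R); that is, the minimum in the definition of η_𝒮 is attained and equals this value. -/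
open Matrix Kronecker BigOperators

noncomputable section

theorem aux_vnorm_sq {ι : Type*} [Fintype ι] (v : ι → ℂ) :
    ((∑ i, ‖v i‖ ^ 2 : ℝ) : ℂ) = star v ⬝ᵥ v := by
  push_cast
  simp only [dotProduct, Pi.star_apply]
  refine Finset.sum_congr rfl fun i _ => ?_
  exact (Complex.conj_mul' (v i)).symm

open scoped ComplexOrder in
theorem aux_normal {ι κ : Type*} [Fintype ι] [Fintype κ] (A : Matrix ι κ ℂ) :
    ∃ X : Matrix κ ι ℂ, Aᴴ * A * X = Aᴴ := by
  classical
  have hle : LinearMap.range (Aᴴ * A).mulVecLin ≤ LinearMap.range Aᴴ.mulVecLin := by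
    rintro _ ⟨x, rfl⟩
    exact ⟨A *ᵥ x, by simp⟩
  have heq : LinearMap.range (Aᴴ * A).mulVecLin = LinearMap.range Aᴴ.mulVecLin := by
    apply Submodule.eq_of_le_of_finrank_eq hle
    have h1 := Matrix.rank_conjTranspose_mul_self A
    have h2 := Matrix.rank_conjTranspose A
    exact h1.trans h2.symm
  have : ∀ i : ι, ∃ x : κ → ℂ, (Aᴴ * A) *ᵥ x = Aᴴ *ᵥ (Pi.single i 1) := by
    intro i
    have : Aᴴ *ᵥ (Pi.single i 1) ∈ LinearMap.range (Aᴴ * A).mulVecLin := by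
      rw [heq]; exact ⟨_, rfl⟩
    exact this
  choose x hx using this
  refine ⟨Matrix.of fun c i => x i c, ?_⟩
  ext c i
  have := congrFun (hx i) c
  rw [Matrix.mulVec_single_one] at this
  exact this

theorem aux_pinv_exists {ι κ : Type*} [Fintype ι] [Fintype κ] (A : Matrix ι κ ℂ) :
    ∃ B, IsMoorePenrose A B := by
  obtain ⟨X, hX⟩ := aux_normal A
  obtain ⟨Z, hZ⟩ := aux_normal Aᴴ
  rw [conjTranspose_conjTranspose] at hZ
  -- right inverse facts
  have hX' : Xᴴ * Aᴴ * A = A := by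
    have := congrArg conjTranspose hX
    simpa [conjTranspose_mul, Matrix.mul_assoc] using this
  have hAX : (A * X)ᴴ = A * X := by
    calc (A * X)ᴴ = Xᴴ * (Aᴴ * A * X) := by rw [hX, conjTranspose_mul]
      _ = (Xᴴ * Aᴴ * A) * X := by simp only [Matrix.mul_assoc]
      _ = A * X := by rw [hX']
  have hAXA : A * X * A = A := by
    rw [← hAX, conjTranspose_mul]; exact hX'
  have hZ' : Zᴴ * A * Aᴴ = Aᴴ := by
    have := congrArg conjTranspose hZ
    simpa [conjTranspose_mul, Matrix.mul_assoc] using this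
  have hYA : (Zᴴ * A)ᴴ = Zᴴ * A := by
    have h : Aᴴ * Z = Zᴴ * A := by
      calc Aᴴ * Z = (Zᴴ * A * Aᴴ) * Z := by rw [hZ']
        _ = Zᴴ * (A * Aᴴ * Z) := by simp only [Matrix.mul_assoc]
        _ = Zᴴ * A := by rw [hZ]
    rw [conjTranspose_mul, conjTranspose_conjTranspose, h]
  have hAYA : A * (Zᴴ * A) = A := by
    rw [← hYA, conjTranspose_mul, conjTranspose_conjTranspose, ← Matrix.mul_assoc]; exact hZ
  have hAB : A * (Zᴴ * A * X) = A * X := by rw [← Matrix.mul_assoc, hAYA]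
  have hBA : Zᴴ * A * X * A = Zᴴ * A := by
    rw [Matrix.mul_assoc Zᴴ, Matrix.mul_assoc Zᴴ, hAXA]
  refine ⟨Zᴴ * A * X, ?_, ?_, ?_, ?_⟩
  · rw [hAB, hAXA]
  · rw [hBA, Matrix.mul_assoc Zᴴ A X, ← Matrix.mul_assoc (Zᴴ * A) Zᴴ, Matrix.mul_assoc,
      Matrix.mul_assoc, ← Matrix.mul_assoc Zᴴ A X, hAB, Matrix.mul_assoc]
  · rw [hAB, hAX]
  · rw [hBA, hYA]

theorem aux_pinv {ι κ : Type*} [Fintype ι] [Fintype κ] (A : Matrix ι κ ℂ) :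
    IsMoorePenrose A (pinv A) := by
  have h := aux_pinv_exists A
  unfold pinv
  rw [dif_pos h]
  exact h.choose_spec

theorem aux_proj {κ : Type*} [Fintype κ] (Q : Matrix κ κ ℂ)
    (hQ : Qᴴ = Q) (hQQ : Q * Q = Q) (y : κ → ℂ) : vnorm (Q *ᵥ y) ≤ vnorm y := by
  apply Real.sqrt_le_sqrt
  have h1 : star (Q *ᵥ y) ⬝ᵥ (Q *ᵥ y) = star y ⬝ᵥ (Q *ᵥ y) := by
    rw [star_mulVec, hQ, ← dotProduct_mulVec, mulVec_mulVec, hQQ]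
  have h2 : star (Q *ᵥ y) ⬝ᵥ y = star y ⬝ᵥ (Q *ᵥ y) := by
    rw [star_mulVec, hQ, ← dotProduct_mulVec]
  have h3 : (∑ i, ‖y i‖ ^ 2 : ℝ) = ∑ i, ‖(Q *ᵥ y) i‖ ^ 2 + ∑ i, ‖(y - Q *ᵥ y) i‖ ^ 2 := by
    apply Complex.ofReal_injective
    rw [Complex.ofReal_add, aux_vnorm_sq, aux_vnorm_sq, aux_vnorm_sq, star_sub, sub_dotProduct,
      dotProduct_sub, dotProduct_sub, h1, h2]
    ring
  have h4 : (0 : ℝ) ≤ ∑ i, ‖(y - Q *ᵥ y) i‖ ^ 2 := by positivity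
  linarith

theorem aux_vnorm_neg {κ : Type*} [Fintype κ] (y : κ → ℂ) : vnorm (-y) = vnorm y := by
  simp [vnorm]

theorem aux_norm_sum {ι κ δ : Type*} [Fintype ι] [Fintype κ] [Fintype δ] [DecidableEq δ]
    (P : δ → Matrix ι κ ℂ)
    (hP : ∀ a b, ∑ m, ∑ l, (starRingEnd ℂ) (P a m l) * P b m l = if a = b then 1 else 0)
    (x : δ → ℂ) :
    ∑ m, ∑ l, ‖(∑ a, x a • P a) m l‖ ^ 2 = ∑ a, ‖x a‖ ^ 2 := by
  apply Complex.ofReal_injective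
  push_cast
  simp only [← Complex.conj_mul', Matrix.sum_apply, Matrix.smul_apply, smul_eq_mul, map_sum,
    map_mul, Finset.sum_mul_sum]
  calc ∑ m, ∑ l, ∑ a, ∑ b, (starRingEnd ℂ) (x a) * (starRingEnd ℂ) (P a m l) * (x b * P b m l)
      = ∑ a, ∑ b, (starRingEnd ℂ) (x a) * x b *
          ∑ m, ∑ l, (starRingEnd ℂ) (P a m l) * P b m l := by
        simp only [Finset.mul_sum]
        rw [Finset.sum_congr rfl fun m _ => Finset.sum_comm]
        rw [Finset.sum_comm]
        refine Finset.sum_congr rfl fun a _ => ?_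
        rw [Finset.sum_congr rfl fun m _ => Finset.sum_comm]
        rw [Finset.sum_comm]
        refine Finset.sum_congr rfl fun b _ => Finset.sum_congr rfl fun m _ =>
          Finset.sum_congr rfl fun l _ => by ring
    _ = _ := by simp [hP]


/-- Structured backward error for coefficients in linear subspaces `𝒮ⱼ` spanned by
Frobenius-orthonormal bases `P^(i,j)`: the structured backward error `η_𝒮` of the approximate
eigenpairs `(V, Λ)` is attained and equals `‖[((G ⊙ᵀ Vᵀ) ⊗ Iₙ) P]† r‖₂`, where `r = vec R`
and `P` is the block-diagonal matrix of the vectorized bases. -/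
theorem structured_backward_error_eq (n k p : ℕ)
    (F : Fin k → Matrix (Fin n) (Fin n) ℂ)
    (f : Fin k → ℂ → ℂ) (lam : Fin p → ℂ)
    (V : Matrix (Fin n) (Fin p) ℂ)
    (d : Fin k → ℕ)
    (P : (j : Fin k) → Fin (d j) → Matrix (Fin n) (Fin n) ℂ)
    (hP : ∀ j a b, ∑ m, ∑ l, (starRingEnd ℂ) (P j a m l) * P j b m l =
      if a = b then 1 else 0)
    (hF : ∀ j, F j ∈ Submodule.span ℂ (Set.range (P j)))
    (G : Matrix (Fin p) (Fin k) ℂ) (hG : ∀ i j, G i j = f j (lam i))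
    (R : Matrix (Fin n) (Fin p) ℂ)
    (hR : R = ∑ j, F j * V * Matrix.diagonal fun i => f j (lam i))
    (r : Fin p × Fin n → ℂ) (hr : ∀ i m, r (i, m) = R m i)
    (Pm : Matrix ((Fin k × Fin n) × Fin n) ((j : Fin k) × Fin (d j)) ℂ)
    (hPm : ∀ jl m c, Pm (jl, m) c = if jl.1 = c.1 then P c.1 c.2 m jl.2 else 0) :
    IsLeast
      {x : ℝ | ∃ δF : Fin k → Matrix (Fin n) (Fin n) ℂ,
        (∀ j, δF j ∈ Submodule.span ℂ (Set.range (P j))) ∧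
        (∑ j, (F j + δF j) * V * Matrix.diagonal fun i => f j (lam i)) = 0 ∧
        x = fnorm (Matrix.of fun (m : Fin n) (jl : Fin k × Fin n) => δF jl.1 m jl.2)}
      (vnorm ((pinv ((krt G Vᵀ ⊗ₖ (1 : Matrix (Fin n) (Fin n) ℂ)) * Pm)).mulVec r)) := by
  classical
  set A := (krt G Vᵀ ⊗ₖ (1 : Matrix (Fin n) (Fin n) ℂ)) * Pm with hA
  -- the structured matrices attached to a coefficient vector
  have key : ∀ (x : ((j : Fin k) × Fin (d j)) → ℂ) (i : Fin p) (m : Fin n),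
      (A *ᵥ x) (i, m) = (∑ j, (∑ a, x ⟨j, a⟩ • P j a) * V *
        Matrix.diagonal fun i => f j (lam i)) m i := by
    intro x i m
    rw [hA, ← mulVec_mulVec]
    have e1 : ∀ j l m, (Pm *ᵥ x) ((j, l), m) = (∑ a, x ⟨j, a⟩ • P j a) m l := by
      intro j l m
      simp only [mulVec, dotProduct, hPm, Fintype.sum_sigma, Matrix.sum_apply, Matrix.smul_apply,
        smul_eq_mul]
      rw [Finset.sum_eq_single j]
      · exact Finset.sum_congr rfl fun a _ => by simp [mul_comm]
      · intro b _ hb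
        simp [hb.symm]
      · simp
    simp only [mulVec, dotProduct] at e1 ⊢
    simp only [Fintype.sum_prod_type, e1, kroneckerMap_apply, krt, Matrix.of_apply, hG,
      Matrix.sum_apply m i, Matrix.mul_diagonal, Matrix.one_apply, transpose_apply]
    refine Finset.sum_congr rfl fun j _ => ?_
    rw [Matrix.mul_apply, Finset.sum_mul]
    refine Finset.sum_congr rfl fun l _ => ?_
    simp
    ring
  have hnorm : ∀ (x : ((j : Fin k) × Fin (d j)) → ℂ),
      fnorm (Matrix.of fun (m : Fin n) (jl : Fin k × Fin n) =>
        (∑ a, x ⟨jl.1, a⟩ • P jl.1 a) m jl.2) = vnorm x := by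
    intro x
    unfold fnorm vnorm
    congr 1
    simp only [Fintype.sum_prod_type, Fintype.sum_sigma, Matrix.of_apply]
    rw [Finset.sum_comm]
    exact Finset.sum_congr rfl fun j _ => aux_norm_sum (P j) (hP j) fun a => x ⟨j, a⟩
  have hrep : ∀ E : Fin k → Matrix (Fin n) (Fin n) ℂ,
      (∀ j, E j ∈ Submodule.span ℂ (Set.range (P j))) →
      ∃ x : ((j : Fin k) × Fin (d j)) → ℂ, E = fun j => ∑ a, x ⟨j, a⟩ • P j a := by
    intro E hE
    have : ∀ j, ∃ c : Fin (d j) → ℂ, ∑ a, c a • P j a = E j := fun j =>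
      (Submodule.mem_span_range_iff_exists_fun ℂ).1 (hE j)
    choose c hc using this
    exact ⟨fun s => c s.1 s.2, funext fun j => (hc j).symm⟩
  obtain ⟨x0, rfl⟩ := hrep F hF
  have hr0 : A *ᵥ x0 = r := by
    ext ⟨i, m⟩
    rw [key, hr, hR]
  obtain ⟨h1, h2, -, h4⟩ := aux_pinv A
  clear_value A
  -- feasibility in terms of coefficients
  have hfeas : ∀ x : ((j : Fin k) × Fin (d j)) → ℂ,
      (∑ j, ((∑ a, x0 ⟨j, a⟩ • P j a) + ∑ a, x ⟨j, a⟩ • P j a) * V *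
        Matrix.diagonal fun i => f j (lam i)) = 0 ↔ A *ᵥ x = -r := by
    intro x
    simp only [Matrix.add_mul, Finset.sum_add_distrib]
    rw [← hR, add_comm, add_eq_zero_iff_eq_neg]
    constructor
    · intro h
      ext ⟨i, m⟩
      rw [key, h, Pi.neg_apply, hr, Matrix.neg_apply]
    · intro h
      ext m i
      rw [← key, h, Pi.neg_apply, hr, Matrix.neg_apply]
  constructor
  · refine ⟨fun j => ∑ a, (-(pinv A *ᵥ r)) ⟨j, a⟩ • P j a, ?_, ?_, ?_⟩
    · intro j
      exact Submodule.sum_mem _ fun a _ => Submodule.smul_mem _ _ (Submodule.subset_span ⟨a, rfl⟩)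
    · rw [hfeas, mulVec_neg, ← hr0, mulVec_mulVec, mulVec_mulVec, h1]
    · rw [hnorm, aux_vnorm_neg]
  · rintro _ ⟨E, hE, hE0, rfl⟩
    obtain ⟨x, rfl⟩ := hrep E hE
    rw [hnorm]
    rw [hfeas] at hE0
    have : r = A *ᵥ (-x) := by rw [mulVec_neg, hE0, neg_neg]
    rw [this, mulVec_mulVec, ← aux_vnorm_neg x]
    exact aux_proj _ h4 (by rw [← Matrix.mul_assoc, h2]) _
end
end
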